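/- There exists a constant C > 0, depending only on d and the Littlewood–Paley functions, such that for all Schwartz functions u and v on ℝ^d, ‖uv‖_{Ḃ^{d/2}_{2,1}} ≤ C ‖u‖_{Ḃ^{d/2}_{2,1}} ‖v‖_{Ḃ^{d/2}_{2,1}}. -/

import Mathlib

open MeasureTheory SchwartzMap Real Complex
open scoped FourierTransform ENNReal NNReal

noncomputable section

/-- Euclidean space `ℝ^d`. -/
abbrev Ed (d : ℕ) := EuclideanSpace ℝ (Fin d)

/-- A Littlewood–Paley pair `(χ, φ)` on `ℝ^d`: smooth functions with
`supp χ ⊆ {|ξ| ≤ 4/3}`, `supp φ ⊆ {3/4 ≤ |ξ| ≤ 8/3}`,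
`χ(ξ) + ∑_{q ≥ 0} φ(2^{-q}ξ) = 1` for all `ξ`, and `∑_{q ∈ ℤ} φ(2^{-q}ξ) = 1` for `ξ ≠ 0`. -/
structure LPPair (d : ℕ) where
  χ : Ed d → ℝ
  φ : Ed d → ℝ
  smooth_χ : ContDiff ℝ (⊤ : ℕ∞) χ
  smooth_φ : ContDiff ℝ (⊤ : ℕ∞) φ
  supp_χ : Function.support χ ⊆ {ξ : Ed d | ‖ξ‖ ≤ 4/3}
  supp_φ : Function.support φ ⊆ {ξ : Ed d | 3/4 ≤ ‖ξ‖ ∧ ‖ξ‖ ≤ 8/3}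
  sum_one : ∀ ξ : Ed d, χ ξ + ∑' q : ℕ, φ ((2:ℝ) ^ (-(q:ℤ)) • ξ) = 1
  sum_one' : ∀ ξ : Ed d, ξ ≠ 0 → ∑' q : ℤ, φ ((2:ℝ) ^ (-q) • ξ) = 1

variable {d : ℕ}

/-- Homogeneous Littlewood–Paley block `Δ̇_q u = 𝓕⁻¹(φ(2^{-q}·) 𝓕u)`. -/
def lpBlock (P : LPPair d) (q : ℤ) (u : Ed d → ℂ) : Ed d → ℂ :=
  𝓕⁻ (fun ξ => (P.φ ((2:ℝ) ^ (-q) • ξ) : ℂ) * 𝓕 u ξ)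

/-- Low-frequency cut-off `Ṡ_q u = 𝓕⁻¹(χ(2^{-q}·) 𝓕u)`. -/
def sBlock (P : LPPair d) (q : ℤ) (u : Ed d → ℂ) : Ed d → ℂ :=
  𝓕⁻ (fun ξ => (P.χ ((2:ℝ) ^ (-q) • ξ) : ℂ) * 𝓕 u ξ)

/-- `ℓ^r(ℤ)`-norm of a family of extended nonnegative reals. -/
def ellNorm (r : ℝ≥0∞) (a : ℤ → ℝ≥0∞) : ℝ≥0∞ :=
  if r = ∞ then ⨆ q, a q else (∑' q, a q ^ r.toReal) ^ (1 / r.toReal)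

/-- Homogeneous Besov norm `‖u‖_{Ḃ^s_{p,r}}`. -/
def besovNorm (P : LPPair d) (s : ℝ) (p r : ℝ≥0∞) (u : Ed d → ℂ) : ℝ≥0∞ :=
  ellNorm r (fun q => (2:ℝ≥0∞) ^ ((q : ℝ) * s) * eLpNorm (lpBlock P q u) p volume)

/-- Homogeneous Sobolev norm `‖u‖_{Ḣ^s} = ‖ |ξ|^s 𝓕u(ξ) ‖_{L²_ξ}`. -/
def sobNorm (s : ℝ) (u : Ed d → ℂ) : ℝ≥0∞ :=
  eLpNorm (fun ξ : Ed d => ‖ξ‖ ^ s * ‖𝓕 u ξ‖) 2 volume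

/-- Hybrid Besov norm `‖u‖_{𝓑̇^s}`. -/
def hybridNorm (P : LPPair d) (s : ℝ) (u : Ed d → ℂ) : ℝ≥0∞ :=
  (∑' q : ℤ, if q < 0 then
      ((2:ℝ≥0∞) ^ ((q : ℝ) * s) * eLpNorm (lpBlock P q u) 2 volume) ^ (2:ℝ) else 0) ^ (1/2 : ℝ)
  + ∑' q : ℤ, if 0 ≤ q then
      (2:ℝ≥0∞) ^ ((q : ℝ) * (d : ℝ) / 2) * eLpNorm (lpBlock P q u) 2 volume else 0

/-- High-frequency norm `‖u‖^h_{Ḃ^σ_{2,1}}`. -/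
def highNorm (P : LPPair d) (σ : ℝ) (u : Ed d → ℂ) : ℝ≥0∞ :=
  ∑' q : ℤ, if 0 ≤ q then (2:ℝ≥0∞) ^ ((q : ℝ) * σ) * eLpNorm (lpBlock P q u) 2 volume else 0


/-- L2 norm of a nonnegative function. -/
def ltwo {α : Type*} [MeasurableSpace α] (μ : Measure α) (F : α → ℝ≥0∞) : ℝ≥0∞ :=
  (∫⁻ x, F x ^ 2 ∂μ) ^ (1/2 : ℝ)

lemma ltwo_mono {α : Type*} [MeasurableSpace α] {μ : Measure α} {F G : α → ℝ≥0∞}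
    (h : ∀ᵐ x ∂μ, F x ≤ G x) : ltwo μ F ≤ ltwo μ G := by
  unfold ltwo
  apply ENNReal.rpow_le_rpow _ (by norm_num)
  apply lintegral_mono_ae
  filter_upwards [h] with x hx
  gcongr

lemma ltwo_sq {α : Type*} [MeasurableSpace α] (μ : Measure α) (F : α → ℝ≥0∞) :
    ltwo μ F ^ 2 = ∫⁻ x, F x ^ 2 ∂μ := by
  unfold ltwo
  rw [← ENNReal.rpow_natCast, ← ENNReal.rpow_mul]
  norm_num

lemma ltwo_const_mul {α : Type*} [MeasurableSpace α] (μ : Measure α) (c : ℝ≥0∞)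
    {F : α → ℝ≥0∞} (hF : Measurable F) :
    ltwo μ (fun x => c * F x) = c * ltwo μ F := by
  unfold ltwo
  simp_rw [mul_pow]
  rw [lintegral_const_mul _ (by fun_prop), ENNReal.mul_rpow_of_nonneg _ _ (by norm_num),
    ← ENNReal.rpow_natCast, ← ENNReal.rpow_mul]
  norm_num

lemma ltwo_cs {α : Type*} [MeasurableSpace α] (μ : Measure α)
    {F G : α → ℝ≥0∞} (hF : Measurable F) (hG : Measurable G) :
    ∫⁻ x, F x * G x ∂μ ≤ ltwo μ F * ltwo μ G := by
  have := ENNReal.lintegral_mul_le_Lp_mul_Lq μ Real.HolderConjugate.two_two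
    hF.aemeasurable hG.aemeasurable
  simpa [ltwo] using this

lemma ltwo_minkowski {α β : Type*} [MeasurableSpace α] [MeasurableSpace β]
    (μ : Measure α) (ν : Measure β) [SFinite μ] [SFinite ν] (K : α → β → ℝ≥0∞)
    (hK : Measurable (Function.uncurry K)) :
    ltwo μ (fun x => ∫⁻ y, K x y ∂ν) ≤ ∫⁻ y, ltwo μ (fun x => K x y) ∂ν := by
  have h1 : ∀ x, Measurable (K x) := fun x => hK.of_uncurry_left
  have h2 : ∀ y, Measurable (fun x => K x y) := fun x => hK.of_uncurry_right
  have hL : Measurable (fun y => ltwo μ (fun x => K x y)) := by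
    unfold ltwo
    apply Measurable.pow_const
    apply Measurable.lintegral_prod_left'
      (f := fun p : α × β => K p.1 p.2 ^ 2)
    exact hK.pow_const 2
  have key : ∫⁻ x, (∫⁻ y, K x y ∂ν) ^ 2 ∂μ ≤ (∫⁻ y, ltwo μ (fun x => K x y) ∂ν) ^ 2 := by
    calc ∫⁻ x, (∫⁻ y, K x y ∂ν) ^ 2 ∂μ
        = ∫⁻ x, ∫⁻ y, ∫⁻ z, K x y * K x z ∂ν ∂ν ∂μ := by
          congr 1; ext x
          rw [sq, ← lintegral_mul_const _ (h1 x)]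
          congr 1; ext y
          rw [lintegral_const_mul _ (h1 x)]
      _ = ∫⁻ y, ∫⁻ x, ∫⁻ z, K x y * K x z ∂ν ∂μ ∂ν := by
          rw [lintegral_lintegral_swap]
          apply Measurable.aemeasurable
          apply Measurable.lintegral_prod_right'
            (f := fun p : (α × β) × β => K p.1.1 p.1.2 * K p.1.1 p.2)
          exact (hK.comp measurable_fst).mul
            (hK.comp ((measurable_fst.comp measurable_fst).prodMk measurable_snd))
      _ = ∫⁻ y, ∫⁻ z, ∫⁻ x, K x y * K x z ∂μ ∂ν ∂ν := by
          congr 1; ext y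
          rw [lintegral_lintegral_swap]
          apply Measurable.aemeasurable
          exact ((h2 y).comp measurable_fst).mul hK
      _ ≤ ∫⁻ y, ∫⁻ z, ltwo μ (fun x => K x y) * ltwo μ (fun x => K x z) ∂ν ∂ν := by
          gcongr with y z
          exact ltwo_cs μ (h2 y) (h2 z)
      _ = (∫⁻ y, ltwo μ (fun x => K x y) ∂ν) ^ 2 := by
          rw [sq, ← lintegral_mul_const _ hL]
          congr 1; ext y
          rw [lintegral_const_mul _ hL]
  have := ENNReal.rpow_le_rpow key (z := (1/2:ℝ)) (by norm_num)
  refine this.trans_eq ?_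
  rw [← ENNReal.rpow_natCast, ← ENNReal.rpow_mul]
  norm_num

lemma ltwo_tsum {α : Type*} [MeasurableSpace α] (μ : Measure α) [SFinite μ]
    (F : ℤ → α → ℝ≥0∞) (hF : ∀ p, Measurable (F p)) :
    ltwo μ (fun x => ∑' p, F p x) ≤ ∑' p, ltwo μ (F p) := by
  have := ltwo_minkowski μ (Measure.count : Measure ℤ) (fun x p => F p x)
    (measurable_from_prod_countable_left hF)
  simpa [lintegral_count] using this

lemma ltwo_add {α : Type*} [MeasurableSpace α] (μ : Measure α)
    {F G : α → ℝ≥0∞} (hF : Measurable F) (hG : Measurable G) :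
    ltwo μ (fun x => F x + G x) ≤ ltwo μ F + ltwo μ G := by
  have := ENNReal.lintegral_Lp_add_le (p := 2) (μ := μ) hF.aemeasurable hG.aemeasurable
    (by norm_num)
  simpa [ltwo] using this

lemma ltwo_young (F G : Ed d → ℝ≥0∞) (hF : Measurable F) (hG : Measurable G) :
    ltwo volume (fun ξ => ∫⁻ η, F η * G (ξ - η)) ≤ (∫⁻ η, F η) * ltwo volume G := by
  refine (ltwo_minkowski volume volume (fun ξ η => F η * G (ξ - η)) ?_).trans_eq ?_
  · exact (hF.comp measurable_snd).mul (hG.comp (measurable_fst.sub measurable_snd))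
  · rw [← lintegral_mul_const _ hF]
    congr 1; ext η
    rw [ltwo_const_mul _ _ (by fun_prop)]
    congr 1
    unfold ltwo
    congr 1
    exact lintegral_sub_right_eq_self (fun x => G x ^ 2) η

/-- the multiplier -/
def psi (P : LPPair d) (q : ℤ) (ξ : Ed d) : ℝ≥0∞ := ‖P.φ ((2:ℝ) ^ (-q) • ξ)‖ₑ

lemma psi_meas (P : LPPair d) (q : ℤ) : Measurable (psi P q) := by
  have := P.smooth_φ.continuous
  unfold psi
  apply Continuous.measurable
  fun_prop

lemma psi_supp (P : LPPair d) (q : ℤ) (ξ : Ed d) (h : psi P q ξ ≠ 0) :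
    3/4 * (2:ℝ) ^ q ≤ ‖ξ‖ ∧ ‖ξ‖ ≤ 8/3 * (2:ℝ) ^ q := by
  have h1 : (2:ℝ) ^ (-q) • ξ ∈ Function.support P.φ := by
    simpa [psi] using h
  have h2 := P.supp_φ h1
  have hp : (0:ℝ) < 2 ^ q := by positivity
  simp only [Set.mem_ofPred_eq, norm_smul, zpow_neg, norm_inv, norm_zpow, Real.norm_ofNat] at h2
  rw [inv_mul_eq_div, le_div_iff₀ hp, div_le_iff₀ hp] at h2
  exact h2

lemma psi_sum (P : LPPair d) (ξ : Ed d) (h : ξ ≠ 0) : 1 ≤ ∑' q, psi P q ξ := by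
  have h1 := P.sum_one' ξ h
  have h2 := enorm_tsum_le_tsum_enorm (f := fun q : ℤ => P.φ ((2:ℝ) ^ (-q) • ξ))
  rw [h1] at h2
  simpa [psi] using h2

lemma phi_compact (P : LPPair d) : HasCompactSupport P.φ := by
  apply HasCompactSupport.of_support_subset_isCompact (isCompact_closedBall (0 : Ed d) (8/3))
  intro x hx
  simpa using (P.supp_φ hx).2

lemma psi_bdd (P : LPPair d) : ∃ M : ℝ≥0, ∀ q ξ, psi P q ξ ≤ M := by
  obtain ⟨C, hC⟩ := (phi_compact P).exists_bound_of_continuous P.smooth_φ.continuous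
  refine ⟨C.toNNReal, fun q ξ => ?_⟩
  unfold psi
  rw [enorm_le_coe, ← NNReal.coe_le_coe]
  simpa using Or.inl (hC _)

lemma ltwo_eq_eLpNorm (f : Ed d → ℂ) : eLpNorm f 2 volume = ltwo volume (fun x => ‖f x‖ₑ) := by
  rw [eLpNorm_eq_lintegral_rpow_enorm_toReal (by norm_num) (by norm_num)]
  simp [ltwo]

lemma plancherel (f : 𝓢(Ed d, ℂ)) : eLpNorm (⇑(𝓕⁻ f : 𝓢(Ed d, ℂ))) 2 volume = eLpNorm (⇑f) 2 volume := by
  have h := norm_fourier_toL2_eq (𝓕⁻ f : 𝓢(Ed d, ℂ))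
  rw [FourierTransform.fourier_fourierInv_eq] at h
  rw [SchwartzMap.norm_toLp, SchwartzMap.norm_toLp] at h
  exact ((ENNReal.toReal_eq_toReal_iff' (f.memLp 2 volume).eLpNorm_ne_top
    ((𝓕⁻ f : 𝓢(Ed d, ℂ)).memLp 2 volume).eLpNorm_ne_top).1 h).symm

lemma block_eq (P : LPPair d) (q : ℤ) (u : 𝓢(Ed d, ℂ)) :
    eLpNorm (lpBlock P q ⇑u) 2 volume
      = ltwo volume (fun ξ => psi P q ξ * ‖(𝓕 u : 𝓢(Ed d, ℂ)) ξ‖ₑ) := by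
  have hc : HasCompactSupport (fun ξ : Ed d => (P.φ ((2:ℝ) ^ (-q) • ξ) : ℂ) * (𝓕 u : 𝓢(Ed d, ℂ)) ξ) := by
    apply HasCompactSupport.of_support_subset_isCompact
      (isCompact_closedBall (0 : Ed d) (8/3 * (2:ℝ) ^ q))
    intro x hx
    have : psi P q x ≠ 0 := by
      intro h0
      apply hx
      have : P.φ ((2:ℝ) ^ (-q) • x) = 0 := by simpa [psi] using h0
      simp only [this, Complex.ofReal_zero, zero_mul]
    simpa using (psi_supp P q x this).2
  have hs : ContDiff ℝ (⊤ : ℕ∞) (fun ξ : Ed d => (P.φ ((2:ℝ) ^ (-q) • ξ) : ℂ) * (𝓕 u : 𝓢(Ed d, ℂ)) ξ) := by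
    have h1 := P.smooth_φ
    have h2 := (𝓕 u).smooth ⊤
    refine ContDiff.mul ?_ h2
    exact Complex.ofRealCLM.contDiff.comp (h1.comp (contDiff_const_smul _))
  have := plancherel (hc.toSchwartzMap hs)
  rw [SchwartzMap.fourierInv_coe, ltwo_eq_eLpNorm (⇑(hc.toSchwartzMap hs))] at this
  refine Eq.trans this ?_
  congr 1
  ext ξ
  have hr : ∀ r : ℝ, ‖(r : ℂ)‖ₑ = ‖r‖ₑ := fun r => by
    rw [← ofReal_norm, ← ofReal_norm, Complex.norm_real]
  simp [psi, hr]

lemma fourier_mul_le (u v : 𝓢(Ed d, ℂ)) : ∃ w : 𝓢(Ed d, ℂ), (⇑w = fun x => u x * v x) ∧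
    ∀ ξ, ‖(𝓕 w : 𝓢(Ed d, ℂ)) ξ‖ₑ ≤ ∫⁻ η, ‖(𝓕 u : 𝓢(Ed d, ℂ)) η‖ₑ * ‖(𝓕 v : 𝓢(Ed d, ℂ)) (ξ - η)‖ₑ := by
  refine ⟨pairing (ContinuousLinearMap.mul ℂ ℂ) u v, by ext x; simp, fun ξ => ?_⟩
  have h : 𝓕 (pairing (ContinuousLinearMap.mul ℂ ℂ) u v)
      = SchwartzMap.convolution (ContinuousLinearMap.mul ℂ ℂ) (𝓕 u) (𝓕 v) := by
    have key : 𝓕⁻ (SchwartzMap.convolution (ContinuousLinearMap.mul ℂ ℂ) (𝓕 u) (𝓕 v))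
      = pairing (ContinuousLinearMap.mul ℂ ℂ) u v := by
      ext x
      have h1 := fourier_convolution (ContinuousLinearMap.mul ℂ ℂ) (𝓕 u) (𝓕 v)
      have h2 : ∀ f : 𝓢(Ed d, ℂ), ∀ x, (𝓕⁻ f : 𝓢(Ed d, ℂ)) x = (𝓕 f : 𝓢(Ed d, ℂ)) (-x) := fun f x => by
        rw [SchwartzMap.fourierInv_coe, SchwartzMap.fourier_coe, Real.fourierInv_eq_fourier_neg]
      rw [h2, h1]
      simp only [pairing_apply_apply]
      rw [← h2, ← h2]
      simp
    rw [← key]; simp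
  rw [h, convolution_apply]
  unfold MeasureTheory.convolution
  refine (enorm_integral_le_lintegral_enorm _).trans ?_
  simp

/-- dyadic weight -/
def wt (d : ℕ) (q : ℤ) : ℝ≥0∞ := (2:ℝ≥0∞) ^ ((q : ℝ) * ((d : ℝ)/2))

/-- Besov norm on the Fourier side -/
def bes (P : LPPair d) (F : Ed d → ℝ≥0∞) : ℝ≥0∞ :=
  ∑' q, wt d q * ltwo volume (fun ξ => psi P q ξ * F ξ)

lemma besov_eq (P : LPPair d) (u : 𝓢(Ed d, ℂ)) :
    besovNorm P ((d : ℝ)/2) 2 1 ⇑u = bes P (fun ξ => ‖(𝓕 u : 𝓢(Ed d, ℂ)) ξ‖ₑ) := by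
  simp [besovNorm, ellNorm, block_eq, bes, wt]

lemma wt_add (d : ℕ) (p q : ℤ) : wt d (p + q) = wt d p * wt d q := by
  unfold wt
  rw [← ENNReal.rpow_add _ _ (by norm_num) (by norm_num)]
  congr 1; push_cast; ring

/-- ball volume constant -/
def cball (d : ℕ) : ℝ≥0∞ :=
  (ENNReal.ofReal ((8/3) ^ d) * volume (Metric.ball (0 : Ed d) 1)) ^ (1/2 : ℝ)

lemma cball_ne_top (d : ℕ) : cball d ≠ ∞ := by
  unfold cball
  apply ENNReal.rpow_ne_top_of_nonneg (by norm_num)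
  exact ENNReal.mul_ne_top ENNReal.ofReal_ne_top measure_ball_lt_top.ne

lemma ltwo_ball (p : ℤ) :
    ltwo volume ((Metric.closedBall (0 : Ed d) (8/3 * (2:ℝ) ^ p)).indicator 1)
      = cball d * wt d p := by
  have h1 : ∀ x, ((Metric.closedBall (0 : Ed d) (8/3 * (2:ℝ) ^ p)).indicator
      (1 : Ed d → ℝ≥0∞) x) ^ 2
      = (Metric.closedBall (0 : Ed d) (8/3 * (2:ℝ) ^ p)).indicator 1 x := by
    intro x
    by_cases hx : x ∈ Metric.closedBall (0 : Ed d) (8/3 * (2:ℝ) ^ p) <;> simp [hx]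
  unfold ltwo cball
  simp_rw [h1]
  rw [lintegral_indicator_one Metric.isClosed_closedBall.measurableSet,
    Measure.addHaar_closedBall _ _ (by positivity), finrank_euclideanSpace_fin, mul_pow,
    ENNReal.ofReal_mul (by positivity), mul_right_comm,
    ENNReal.mul_rpow_of_nonneg _ (ENNReal.ofReal _) (by norm_num)]
  congr 1
  rw [← Real.rpow_intCast, ← Real.rpow_natCast, ← Real.rpow_mul (by norm_num),
    ← ENNReal.ofReal_rpow_of_pos (by norm_num), ← ENNReal.rpow_mul]
  unfold wt
  congr 1
  · norm_num
  · ring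

lemma le_sum_psi (hd : 1 ≤ d) (P : LPPair d) (F : Ed d → ℝ≥0∞) :
    ∀ᵐ ξ, F ξ ≤ ∑' q, psi P q ξ * F ξ := by
  have : Nonempty (Fin d) := ⟨⟨0, hd⟩⟩
  have h0 : ∀ᵐ ξ : Ed d, ξ ≠ 0 := by
    simp [ae_iff, measure_singleton]
  filter_upwards [h0] with ξ hξ
  rw [ENNReal.tsum_mul_right]
  exact le_mul_of_one_le_left' (psi_sum P ξ hξ)

lemma l_one_le (hd : 1 ≤ d) (P : LPPair d) (F : Ed d → ℝ≥0∞) (hF : Measurable F) :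
    ∫⁻ ξ, F ξ ≤ cball d * bes P F := by
  have hm := psi_meas P
  calc ∫⁻ ξ, F ξ ≤ ∫⁻ ξ, ∑' q, psi P q ξ * F ξ := lintegral_mono_ae (le_sum_psi hd P F)
    _ = ∑' q, ∫⁻ ξ, psi P q ξ * F ξ := by
        rw [lintegral_tsum]
        intro q
        exact ((hm q).mul hF).aemeasurable
    _ ≤ ∑' q, cball d * (wt d q * ltwo volume (fun ξ => psi P q ξ * F ξ)) := by
        apply ENNReal.tsum_le_tsum
        intro q
        rw [← mul_assoc, ← ltwo_ball]
        refine le_trans (le_of_eq ?_) (ltwo_cs volume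
          (measurable_one.indicator Metric.isClosed_closedBall.measurableSet) ((hm q).mul hF))
        congr 1; ext ξ
        by_cases h : psi P q ξ = 0
        · simp [h]
        · have := (psi_supp P q ξ h).2
          rw [Set.indicator_of_mem (by simpa using this)]
          simp
    _ = _ := by rw [ENNReal.tsum_mul_left]; rfl

/-- geometric constant -/
def cgeo (d : ℕ) : ℝ≥0∞ := ∑' k : ℤ, if k ≤ 2 then wt d k else 0

lemma cgeo_ne_top (hd : 1 ≤ d) : cgeo d ≠ ∞ := by
  unfold cgeo
  have hinj : Function.Injective (fun n : ℕ => (2:ℤ) - n) := by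
    intro a b h; simpa using h
  have hsub : Function.support (fun k : ℤ => if k ≤ 2 then wt d k else 0)
      ⊆ Set.range (fun n : ℕ => (2:ℤ) - n) := by
    intro k hk
    have : k ≤ 2 := by
      by_contra h
      simp [h] at hk
    exact ⟨(2 - k).toNat, by simp; omega⟩
  rw [← hinj.tsum_eq hsub]
  have hp : ∀ n : ℕ, wt d (-(n:ℤ)) = (wt d (-1)) ^ n := by
    intro n
    induction n with
    | zero => simp [wt]
    | succ n ih => rw [pow_succ, ← ih, ← wt_add]; congr 1; push_cast; ring
  have : ∀ n : ℕ, (if (2:ℤ) - n ≤ 2 then wt d ((2:ℤ) - n) else 0) = wt d 2 * (wt d (-1)) ^ n := by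
    intro n
    rw [if_pos (by omega), sub_eq_add_neg, wt_add, hp]
  simp_rw [this]
  rw [ENNReal.tsum_mul_left, ENNReal.tsum_geometric]
  apply ENNReal.mul_ne_top
  · unfold wt
    apply ENNReal.rpow_ne_top_of_nonneg (by positivity) (by norm_num)
  · rw [ENNReal.inv_ne_top]
    apply (tsub_pos_of_lt _).ne'
    unfold wt
    apply ENNReal.rpow_lt_one_of_one_lt_of_neg (by norm_num)
    have : (1:ℝ) ≤ d := by exact_mod_cast hd
    push_cast
    linarith

/-- truncation to frequencies at least `(3/8) 2^q` -/
def hi (q : ℤ) (F : Ed d → ℝ≥0∞) : Ed d → ℝ≥0∞ :=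
  {ξ : Ed d | 3/8 * (2:ℝ) ^ q ≤ ‖ξ‖}.indicator F

lemma hi_meas (q : ℤ) {F : Ed d → ℝ≥0∞} (hF : Measurable F) : Measurable (hi q F) :=
  hF.indicator (measurableSet_le measurable_const measurable_norm)

lemma tail_le (hd : 1 ≤ d) (P : LPPair d) (F : Ed d → ℝ≥0∞) (hF : Measurable F) :
    ∑' q, wt d q * ltwo volume (hi q F) ≤ cgeo d * bes P F := by
  have hm := psi_meas P
  have h1 : ∀ q, ltwo volume (hi q F)
      ≤ ∑' p, if q - p ≤ 2 then ltwo volume (fun ξ => psi P p ξ * F ξ) else 0 := by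
    intro q
    calc ltwo volume (hi q F) ≤ ltwo volume (fun ξ => ∑' p, psi P p ξ * hi q F ξ) :=
          ltwo_mono (le_sum_psi hd P _)
      _ ≤ ∑' p, ltwo volume (fun ξ => psi P p ξ * hi q F ξ) :=
          ltwo_tsum _ _ (fun p => (hm p).mul (hi_meas q hF))
      _ ≤ _ := by
          apply ENNReal.tsum_le_tsum
          intro p
          split_ifs with h
          · apply ltwo_mono
            filter_upwards with ξ
            gcongr
            exact Set.indicator_le_self _ _ _
          · have hz : ∀ ξ, psi P p ξ * hi q F ξ = 0 := by
              intro ξ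
              by_cases hψ : psi P p ξ = 0
              · simp [hψ]
              · have h2 := (psi_supp P p ξ hψ).2
                have h3 : (2:ℝ) ^ (p + 3) ≤ 2 ^ q := zpow_le_zpow_right₀ (by norm_num) (by omega)
                rw [zpow_add₀ (by norm_num)] at h3
                norm_num at h3
                have h4 : (0:ℝ) < 2 ^ p := by positivity
                have : hi q F ξ = 0 := by
                  apply Set.indicator_of_notMem
                  simp only [Set.mem_ofPred_eq, not_le]
                  linarith
                simp [this]
            simp [hz, ltwo]
  calc ∑' q, wt d q * ltwo volume (hi q F)
      ≤ ∑' q, ∑' p, wt d q *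
          (if q - p ≤ 2 then ltwo volume (fun ξ => psi P p ξ * F ξ) else 0) := by
        simp_rw [ENNReal.tsum_mul_left]
        gcongr with q
        exact h1 q
    _ = ∑' p, ∑' q, wt d q *
          (if q - p ≤ 2 then ltwo volume (fun ξ => psi P p ξ * F ξ) else 0) := ENNReal.tsum_comm
    _ = ∑' p, cgeo d * (wt d p * ltwo volume (fun ξ => psi P p ξ * F ξ)) := by
        congr 1; ext p
        rw [← (Equiv.addRight p).tsum_eq]
        unfold cgeo
        rw [← ENNReal.tsum_mul_right]
        congr 1; ext k
        simp only [Equiv.coe_addRight, add_sub_cancel_right, wt_add]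
        split_ifs
        · ring
        · simp
    _ = _ := by rw [ENNReal.tsum_mul_left]; rfl

lemma conv_le (P : LPPair d) (M : ℝ≥0) (hM : ∀ q ξ, psi P q ξ ≤ M)
    (F G : Ed d → ℝ≥0∞) (hF : Measurable F) (hG : Measurable G) (q : ℤ) :
    ltwo volume (fun ξ => psi P q ξ * ∫⁻ η, F η * G (ξ - η))
      ≤ M * ((∫⁻ η, F η) * ltwo volume (hi q G) + (∫⁻ η, G η) * ltwo volume (hi q F)) := by
  have hF1 := hi_meas q hF
  have hG1 := hi_meas q hG
  have m1 : Measurable (fun ξ => ∫⁻ η, F η * hi q G (ξ - η)) :=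
    Measurable.lintegral_prod_right' (f := fun p : Ed d × Ed d => F p.2 * hi q G (p.1 - p.2))
      ((hF.comp measurable_snd).mul (hG1.comp (measurable_fst.sub measurable_snd)))
  have m2 : Measurable (fun ξ => ∫⁻ η, G η * hi q F (ξ - η)) :=
    Measurable.lintegral_prod_right' (f := fun p : Ed d × Ed d => G p.2 * hi q F (p.1 - p.2))
      ((hG.comp measurable_snd).mul (hF1.comp (measurable_fst.sub measurable_snd)))
  calc ltwo volume (fun ξ => psi P q ξ * ∫⁻ η, F η * G (ξ - η))
      ≤ ltwo volume (fun ξ => M * ((∫⁻ η, F η * hi q G (ξ - η))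
          + ∫⁻ η, G η * hi q F (ξ - η))) := by
        apply ltwo_mono
        filter_upwards with ξ
        by_cases hψ : psi P q ξ = 0
        · simp [hψ]
        have hξ := (psi_supp P q ξ hψ).1
        gcongr
        · exact hM q ξ
        have e : ∫⁻ η, G η * hi q F (ξ - η) = ∫⁻ η, G (ξ - η) * hi q F η := by
          rw [← lintegral_sub_left_eq_self _ ξ]
          simp
        rw [e, ← lintegral_add_left (by fun_prop)]
        apply lintegral_mono
        intro η
        have tri : ‖ξ‖ ≤ ‖η‖ + ‖ξ - η‖ := by
          simpa using norm_add_le η (ξ - η)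
        by_cases h : 3/8 * (2:ℝ) ^ q ≤ ‖η‖
        · have : hi q F η = F η := Set.indicator_of_mem (by simpa using h) _
          simp only [this]
          rw [mul_comm (F η) (G (ξ - η))]
          exact le_add_self
        · have : hi q G (ξ - η) = G (ξ - η) :=
            Set.indicator_of_mem (by simp only [Set.mem_ofPred_eq]; push Not at h; linarith) _
          simp only [this]
          exact le_self_add
    _ = M * ltwo volume (fun ξ => (∫⁻ η, F η * hi q G (ξ - η))
          + ∫⁻ η, G η * hi q F (ξ - η)) := ltwo_const_mul _ _ (m1.add m2)
    _ ≤ _ := by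
        gcongr
        refine (ltwo_add _ m1 m2).trans ?_
        gcongr
        · exact ltwo_young F _ hF hG1
        · exact ltwo_young G _ hG hF1

lemma bes_conv (hd : 1 ≤ d) (P : LPPair d) (M : ℝ≥0) (hM : ∀ q ξ, psi P q ξ ≤ M)
    (F G : Ed d → ℝ≥0∞) (hF : Measurable F) (hG : Measurable G) :
    bes P (fun ξ => ∫⁻ η, F η * G (ξ - η))
      ≤ (2 * M * cball d * cgeo d) * bes P F * bes P G := by
  calc bes P (fun ξ => ∫⁻ η, F η * G (ξ - η))
      ≤ ∑' q, wt d q * (M * ((∫⁻ η, F η) * ltwo volume (hi q G)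
          + (∫⁻ η, G η) * ltwo volume (hi q F))) := by
        unfold bes
        gcongr with q
        exact conv_le P M hM F G hF hG q
    _ = ∑' q, ((M * (∫⁻ η, F η)) * (wt d q * ltwo volume (hi q G))
          + (M * (∫⁻ η, G η)) * (wt d q * ltwo volume (hi q F))) := by
        congr 1; ext q; ring
    _ = (M * (∫⁻ η, F η)) * (∑' q, wt d q * ltwo volume (hi q G))
          + (M * (∫⁻ η, G η)) * (∑' q, wt d q * ltwo volume (hi q F)) := by
        rw [ENNReal.tsum_add, ENNReal.tsum_mul_left, ENNReal.tsum_mul_left]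
    _ ≤ (M * (cball d * bes P F)) * (cgeo d * bes P G)
          + (M * (cball d * bes P G)) * (cgeo d * bes P F) := by
        gcongr
        · exact l_one_le hd P F hF
        · exact tail_le hd P G hG
        · exact l_one_le hd P G hG
        · exact tail_le hd P F hF
    _ = _ := by ring

lemma bes_conv_const (hd : 1 ≤ d) (P : LPPair d) :
    ∃ K : ℝ≥0, 0 < K ∧ ∀ F G : Ed d → ℝ≥0∞, Measurable F → Measurable G →
      bes P (fun ξ => ∫⁻ η, F η * G (ξ - η)) ≤ K * bes P F * bes P G := by
  obtain ⟨M, hM⟩ := psi_bdd P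
  have hC : 2 * M * cball d * cgeo d ≠ ∞ :=
    ENNReal.mul_ne_top (ENNReal.mul_ne_top (ENNReal.mul_ne_top ENNReal.ofNat_ne_top
      ENNReal.coe_ne_top) (cball_ne_top d)) (cgeo_ne_top hd)
  have h := bes_conv hd P M hM
  generalize 2 * M * cball d * cgeo d = c at hC h
  lift c to ℝ≥0 using hC
  refine ⟨c + 1, by positivity, fun F G hF hG => (h F G hF hG).trans ?_⟩
  gcongr
  exact le_self_add

lemma bes_mul_le (P : LPPair d) (w : 𝓢(Ed d, ℂ)) (H : Ed d → ℝ≥0∞)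
    (h : ∀ ξ, ‖(𝓕 w : 𝓢(Ed d, ℂ)) ξ‖ₑ ≤ H ξ) :
    bes P (fun ξ => ‖(𝓕 w : 𝓢(Ed d, ℂ)) ξ‖ₑ) ≤ bes P H := by
  unfold bes
  gcongr with q
  apply ltwo_mono
  filter_upwards with ξ
  gcongr
  exact h ξ

lemma enorm_meas (u : 𝓢(Ed d, ℂ)) : Measurable (fun ξ => ‖u ξ‖ₑ) :=
  u.continuous.enorm.measurable

/-- `‖uv‖_{Ḃ^{d/2}_{2,1}} ≤ C‖u‖_{Ḃ^{d/2}_{2,1}}‖v‖_{Ḃ^{d/2}_{2,1}}`. -/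
theorem stmt10 {d : ℕ} (hd : 1 ≤ d) (P : LPPair d) :
    ∃ C : ℝ≥0, 0 < C ∧ ∀ u v : 𝓢(Ed d, ℂ),
      besovNorm P ((d : ℝ)/2) 2 1 (fun x => u x * v x)
        ≤ C * besovNorm P ((d : ℝ)/2) 2 1 ⇑u * besovNorm P ((d : ℝ)/2) 2 1 ⇑v := by
  obtain ⟨K, hK, h⟩ := bes_conv_const hd P
  refine ⟨K, hK, fun u v => ?_⟩
  obtain ⟨w, hw, hle⟩ := fourier_mul_le u v
  rw [← hw, besov_eq, besov_eq, besov_eq]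
  exact (bes_mul_le P w _ hle).trans (h _ _ (enorm_meas (𝓕 u)) (enorm_meas (𝓕 v)))
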